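/- arXiv:2511.07259 — 2 statements merged into one kernel-verified Lean document; each statement's English description precedes it below -/
import Mathlib

section
/- Basis functions for the first enriched triple: with the setting of the first family (affinely independent v₁, v₂, v₃, barycentric coordinates λᵢ, edge parametrizations γⱼ, density k̃_{σ,μ}, polynomial p_{σ,μ}, μ ≥ 1, σ > 0), define φᵢ = 1 - 2λᵢ and ψᵢ = -A_{σ,μ} φᵢ + (2/‖p_{σ,μ}‖²_{2,σ,μ})(-λᵢ² + λ_{i+1}² + λ_{i+2}²) for i = 1,2,3, where ‖p_{σ,μ}‖²_{2,σ,μ} = ∫_{-1}^{1} p_{σ,μ}(t)² k̃_{σ,μ}(t) dt and A_{σ,μ} = (1 + t_{2,σ,μ})/‖p_{σ,μ}‖²_{2,σ,μ}. Then for all i, j ∈ {1,2,3}: I_j(φᵢ) = δᵢⱼ, L_j(φᵢ) = 0, I_j(ψᵢ) = 0, and L_j(ψᵢ) = δᵢⱼ, where I_j(f) = ∫_{-1}^{1} f(γⱼ(t)) k̃_{σ,μ}(t) dt and L_j(f) = ∫_{-1}^{1} p_{σ,μ}(t) f(γⱼ(t)) k̃_{σ,μ}(t) dt. -/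
open MeasureTheory

/-- Lower incomplete gamma function `γ(s,z) = ∫₀^z u^(s-1) e^(-u) du`. -/
noncomputable def lowGamma (s z : ℝ) : ℝ := ∫ u in (0:ℝ)..z, u ^ (s - 1) * Real.exp (-u)

/-- Modified lower incomplete gamma function `γ^mod(s,z) = γ(s,z)/z^s`. -/
noncomputable def gammaMod (s z : ℝ) : ℝ := lowGamma s z / z ^ s

/-- First family of densities `k̃_{σ,μ}` on `[-1,1]`. -/
noncomputable def kTilde (σ μ t : ℝ) : ℝ :=
  (μ / gammaMod ((4 * μ - 3) / (2 * μ)) (1 / (2 * σ ^ (2 * μ)))) *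
    (t ^ 2) ^ (2 * μ - 2) * Real.exp (-(1 / 2) * (t ^ 2 / σ ^ 2) ^ μ)

/-- Second moment `t_{2,σ,μ}` of `k̃_{σ,μ}`. -/
noncomputable def tMom2 (σ μ : ℝ) : ℝ := ∫ t in (-1:ℝ)..1, t ^ 2 * kTilde σ μ t

/-- The orthogonal quadratic polynomial `p_{σ,μ}(t) = t² - t_{2,σ,μ}`. -/
noncomputable def pPoly (σ μ t : ℝ) : ℝ := t ^ 2 - tMom2 σ μ

/-- The squared norm `‖p_{σ,μ}‖²_{2,σ,μ}`. -/
noncomputable def pNormSq (σ μ : ℝ) : ℝ :=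
  ∫ t in (-1:ℝ)..1, (pPoly σ μ t) ^ 2 * kTilde σ μ t

/-- The coefficient `A_{σ,μ} = (1 + t_{2,σ,μ})/‖p_{σ,μ}‖²_{2,σ,μ}`. -/
noncomputable def Acoef (σ μ : ℝ) : ℝ := (1 + tMom2 σ μ) / pNormSq σ μ

/-- Parametrization of the edge `s_j` of the triangle, opposite to the vertex `v j`
(indices taken cyclically in `Fin 3`). -/
noncomputable def edgeParam (v : Fin 3 → ℝ × ℝ) (j : Fin 3) (t : ℝ) : ℝ × ℝ :=
  ((1 + t) / 2) • v (j + 1) + ((1 - t) / 2) • v (j + 2)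

/-- The basis function `φᵢ = 1 - 2λᵢ`. -/
def phiB (lam : Fin 3 → ℝ × ℝ → ℝ) (i : Fin 3) (x : ℝ × ℝ) : ℝ := 1 - 2 * lam i x

/-- The basis function
`ψᵢ = -A_{σ,μ} φᵢ + (2/‖p_{σ,μ}‖²_{2,σ,μ})(-λᵢ² + λ_{i+1}² + λ_{i+2}²)`. -/
noncomputable def psiB (σ μ : ℝ) (lam : Fin 3 → ℝ × ℝ → ℝ) (i : Fin 3) (x : ℝ × ℝ) : ℝ :=
  -Acoef σ μ * phiB lam i x
    + (2 / pNormSq σ μ) * (-(lam i x) ^ 2 + (lam (i + 1) x) ^ 2 + (lam (i + 2) x) ^ 2)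

theorem kT_cont (σ μ : ℝ) (hμ : 1 ≤ μ) : Continuous (kTilde σ μ) := by
  unfold kTilde
  have h1 : Continuous fun t : ℝ => (t ^ 2) ^ (2 * μ - 2) :=
    (continuous_pow 2).rpow_const (fun t => Or.inr (by linarith))
  have h2 : Continuous fun t : ℝ => (t ^ 2 / σ ^ 2) ^ μ :=
    ((continuous_pow 2).div_const _).rpow_const (fun t => Or.inr (by linarith))
  exact (continuous_const.mul h1).mul (Real.continuous_exp.comp (continuous_const.mul h2))

theorem kT_even (σ μ t : ℝ) : kTilde σ μ (-t) = kTilde σ μ t := by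
  simp [kTilde]

theorem low_eq (σ μ : ℝ) (hσ : 0 < σ) (hμ : 1 ≤ μ) :
    ∫ t in (0:ℝ)..1, (t ^ 2) ^ (2 * μ - 2) * Real.exp (-(1 / 2) * (t ^ 2 / σ ^ 2) ^ μ)
      = gammaMod ((4 * μ - 3) / (2 * μ)) (1 / (2 * σ ^ (2 * μ))) / (2 * μ) := by
  set s := (4 * μ - 3) / (2 * μ) with hs
  set z := 1 / (2 * σ ^ (2 * μ)) with hz
  have hμ0 : 0 < μ := by linarith
  have hs0 : 0 < s := by apply div_pos <;> linarith
  have hz0 : 0 < z := by positivity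
  have hsm : 2 * μ * s = 4 * μ - 3 := by rw [hs]; field_simp
  have key : ∀ t : ℝ, 0 < t → (z * t ^ (2 * μ)) ^ (s - 1) * Real.exp (-(z * t ^ (2 * μ)))
      * (z * (2 * μ * t ^ (2 * μ - 1))) = (2 * μ * z ^ s) *
      ((t ^ 2) ^ (2 * μ - 2) * Real.exp (-(1 / 2) * (t ^ 2 / σ ^ 2) ^ μ)) := by
    intro t ht
    have e1 : -(1 / 2) * (t ^ 2 / σ ^ 2) ^ μ = -(z * t ^ (2 * μ)) := by
      rw [Real.div_rpow (by positivity) (by positivity), ← Real.rpow_natCast_mul ht.le,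
        ← Real.rpow_natCast_mul hσ.le, hz]
      push_cast
      field_simp
    have e2 : (z * t ^ (2 * μ)) ^ (s - 1) = z ^ s / z * t ^ (2 * μ * (s - 1)) := by
      rw [Real.mul_rpow hz0.le (by positivity), ← Real.rpow_mul ht.le, Real.rpow_sub_one hz0.ne']
    have e3 : (t ^ 2) ^ (2 * μ - 2) = t ^ (2 * μ * (s - 1)) * t ^ (2 * μ - 1) := by
      rw [← Real.rpow_natCast_mul ht.le, ← Real.rpow_add ht]
      congr 1
      push_cast
      linarith
    rw [e1, e2, e3]
    field_simp
  have hG : Continuous fun t : ℝ => (t ^ 2) ^ (2 * μ - 2) *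
      Real.exp (-(1 / 2) * (t ^ 2 / σ ^ 2) ^ μ) := by
    have h1 : Continuous fun t : ℝ => (t ^ 2) ^ (2 * μ - 2) :=
      (continuous_pow 2).rpow_const (fun t => Or.inr (by linarith))
    have h2 : Continuous fun t : ℝ => (t ^ 2 / σ ^ 2) ^ μ :=
      ((continuous_pow 2).div_const _).rpow_const (fun t => Or.inr (by linarith))
    exact h1.mul (Real.continuous_exp.comp (continuous_const.mul h2))
  have himg : (fun t : ℝ => z * t ^ (2 * μ)) '' Set.uIcc 0 1 ⊆ Set.Icc 0 z := by
    rintro _ ⟨t, ht, rfl⟩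
    rw [Set.uIcc_of_le zero_le_one] at ht
    have := Real.rpow_le_one ht.1 ht.2 (by positivity : 0 ≤ 2 * μ)
    have h0 := Real.rpow_nonneg ht.1 (2 * μ)
    exact ⟨by positivity, by nlinarith⟩
  have sub := intervalIntegral.integral_comp_mul_deriv''' (a := 0) (b := 1)
    (f := fun t : ℝ => z * t ^ (2 * μ)) (f' := fun t : ℝ => z * (2 * μ * t ^ (2 * μ - 1)))
    (g := fun u : ℝ => u ^ (s - 1) * Real.exp (-u)) ?_ ?_ ?_ ?_ ?_
  · have hL : (∫ t in (0:ℝ)..1, ((fun u : ℝ => u ^ (s - 1) * Real.exp (-u)) ∘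
        fun t : ℝ => z * t ^ (2 * μ)) t * (z * (2 * μ * t ^ (2 * μ - 1)))) =
        ∫ t in (0:ℝ)..1, (2 * μ * z ^ s) *
      ((t ^ 2) ^ (2 * μ - 2) * Real.exp (-(1 / 2) * (t ^ 2 / σ ^ 2) ^ μ)) := by
      apply intervalIntegral.integral_congr_ae
      refine Filter.Eventually.of_forall fun t ht => ?_
      rw [Set.uIoc_of_le zero_le_one] at ht
      exact key t ht.1
    rw [hL, intervalIntegral.integral_const_mul] at sub
    have hzs : 0 < z ^ s := by positivity
    have : lowGamma s z = (2 * μ * z ^ s) * ∫ t in (0:ℝ)..1, (t ^ 2) ^ (2 * μ - 2) *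
        Real.exp (-(1 / 2) * (t ^ 2 / σ ^ 2) ^ μ) := by
      rw [sub, lowGamma, Real.zero_rpow (by positivity)]
      simp
    rw [gammaMod, this]
    field_simp
  · exact (continuous_const.mul (Real.continuous_rpow_const (by positivity))).continuousOn
  · intro t ht
    simp only [zero_le_one, min_eq_left, max_eq_right] at ht
    exact ((Real.hasDerivAt_rpow_const (Or.inl ht.1.ne')).const_mul z).hasDerivWithinAt
  · rintro _ ⟨t, ht, rfl⟩
    simp only [zero_le_one, min_eq_left, max_eq_right] at ht
    have : 0 < z * t ^ (2 * μ) := mul_pos hz0 (Real.rpow_pos_of_pos ht.1 _)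
    exact ((Real.continuousAt_rpow_const _ _ (Or.inl this.ne')).mul
      (Real.continuous_exp.comp continuous_neg).continuousAt).continuousWithinAt
  · refine IntegrableOn.mono_set ?_ himg
    have : IntervalIntegrable (fun u : ℝ => u ^ (s - 1) * Real.exp (-u)) volume 0 z :=
      (intervalIntegral.intervalIntegrable_rpow' (by linarith)).mul_continuousOn
        (Real.continuous_exp.comp continuous_neg).continuousOn
    exact (intervalIntegrable_iff_integrableOn_Icc_of_le hz0.le).1 this
  · rw [Set.uIcc_of_le zero_le_one, ← intervalIntegrable_iff_integrableOn_Icc_of_le zero_le_one]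
    refine ((hG.const_mul (2 * μ * z ^ s)).intervalIntegrable 0 1).congr_ae ?_
    refine (ae_restrict_iff' measurableSet_uIoc).2 (Filter.Eventually.of_forall fun t ht => ?_)
    rw [Set.uIoc_of_le zero_le_one] at ht
    exact (key t ht.1).symm

theorem gm_pos (σ μ : ℝ) (hσ : 0 < σ) (hμ : 1 ≤ μ) :
    0 < gammaMod ((4 * μ - 3) / (2 * μ)) (1 / (2 * σ ^ (2 * μ))) := by
  have hz0 : 0 < 1 / (2 * σ ^ (2 * μ)) := by positivity
  have hs0 : 0 < (4 * μ - 3) / (2 * μ) := by apply div_pos <;> linarith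
  refine div_pos ?_ (by positivity)
  refine intervalIntegral.intervalIntegral_pos_of_pos_on ?_ ?_ hz0
  · exact (intervalIntegral.intervalIntegrable_rpow' (by linarith)).mul_continuousOn
        (Real.continuous_exp.comp continuous_neg).continuousOn
  · intro x hx
    have := hx.1
    positivity

theorem int_odd (f : ℝ → ℝ) (hf : ∀ t, f (-t) = -f t) : ∫ t in (-1:ℝ)..1, f t = 0 := by
  have h := intervalIntegral.integral_comp_neg (a := -1) (b := 1) f
  simp only [hf, intervalIntegral.integral_neg, neg_neg] at h
  linarith

theorem kT_mass (σ μ : ℝ) (hσ : 0 < σ) (hμ : 1 ≤ μ) : ∫ t in (-1:ℝ)..1, kTilde σ μ t = 1 := by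
  have hc := kT_cont σ μ hμ
  have h1 : ∫ t in (0:ℝ)..1, kTilde σ μ t = 1 / 2 := by
    have := gm_pos σ μ hσ hμ
    simp only [kTilde, mul_assoc, intervalIntegral.integral_const_mul]
    have e := low_eq σ μ hσ hμ
    rw [e]
    generalize gammaMod _ _ = G at *
    have hμ0 : μ ≠ 0 := by linarith
    field_simp
  have h2 := intervalIntegral.integral_comp_neg (a := 0) (b := 1) (kTilde σ μ)
  simp only [kT_even, neg_zero] at h2
  rw [← intervalIntegral.integral_add_adjacent_intervals (hc.intervalIntegrable (-1) 0)
    (hc.intervalIntegrable 0 1), ← h2, h1]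
  norm_num

theorem kT_poly (σ μ : ℝ) (hσ : 0 < σ) (hμ : 1 ≤ μ) (a b c d e : ℝ) :
    ∫ t in (-1:ℝ)..1, (a + b * t + c * t ^ 2 + d * t ^ 3 + e * t ^ 4) * kTilde σ μ t
      = a + c * tMom2 σ μ + e * ∫ t in (-1:ℝ)..1, t ^ 4 * kTilde σ μ t := by
  have hc := kT_cont σ μ hμ
  have hodd : ∫ t in (-1:ℝ)..1, (b * t + d * t ^ 3) * kTilde σ μ t = 0 := by
    apply int_odd
    intro t
    rw [kT_even]
    ring
  have hi : ∀ f : ℝ → ℝ, Continuous f → IntervalIntegrable f volume (-1) 1 :=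
    fun f hf => hf.intervalIntegrable _ _
  have : ∀ t, (a + b * t + c * t ^ 2 + d * t ^ 3 + e * t ^ 4) * kTilde σ μ t =
    ((a * kTilde σ μ t + c * (t ^ 2 * kTilde σ μ t)) + e * (t ^ 4 * kTilde σ μ t)) +
      (b * t + d * t ^ 3) * kTilde σ μ t := fun t => by ring
  simp only [this]
  rw [intervalIntegral.integral_add (hi _ (by fun_prop)) (hi _ (by fun_prop)),
    intervalIntegral.integral_add (hi _ (by fun_prop)) (hi _ (by fun_prop)),
    intervalIntegral.integral_add (hi _ (by fun_prop)) (hi _ (by fun_prop)), hodd]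
  simp only [intervalIntegral.integral_const_mul, kT_mass σ μ hσ hμ, tMom2]
  ring

theorem kT_nonneg (σ μ : ℝ) (hσ : 0 < σ) (hμ : 1 ≤ μ) (t : ℝ) : 0 ≤ kTilde σ μ t := by
  have := gm_pos σ μ hσ hμ
  unfold kTilde
  positivity

theorem kT_pos (σ μ : ℝ) (hσ : 0 < σ) (hμ : 1 ≤ μ) (t : ℝ) (ht : 0 < t) : 0 < kTilde σ μ t := by
  have := gm_pos σ μ hσ hμ
  unfold kTilde
  positivity

theorem pN_pos (σ μ : ℝ) (hσ : 0 < σ) (hμ : 1 ≤ μ) : 0 < pNormSq σ μ := by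
  have hc := kT_cont σ μ hμ
  unfold pNormSq
  refine intervalIntegral.integral_pos (by norm_num) ?_ ?_ ?_
  · unfold pPoly
    fun_prop
  · intro t _
    exact mul_nonneg (sq_nonneg _) (kT_nonneg σ μ hσ hμ t)
  · by_cases h : tMom2 σ μ = 1
    · refine ⟨1 / 2, by norm_num, mul_pos ?_ (kT_pos σ μ hσ hμ _ (by norm_num))⟩
      rw [pPoly, h]
      norm_num
    · refine ⟨1, by norm_num, mul_pos ?_ (kT_pos σ μ hσ hμ _ (by norm_num))⟩
      rw [pPoly]
      have : (1:ℝ) ^ 2 - tMom2 σ μ ≠ 0 := fun h2 => h (by linarith)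
      positivity

theorem pN_eq (σ μ : ℝ) (hσ : 0 < σ) (hμ : 1 ≤ μ) :
    pNormSq σ μ = (∫ t in (-1:ℝ)..1, t ^ 4 * kTilde σ μ t) - tMom2 σ μ ^ 2 := by
  have h := kT_poly σ μ hσ hμ (tMom2 σ μ ^ 2) 0 (-2 * tMom2 σ μ) 0 1
  have h2 : pNormSq σ μ = ∫ t in (-1:ℝ)..1, (tMom2 σ μ ^ 2 + 0 * t + -2 * tMom2 σ μ * t ^ 2
      + 0 * t ^ 3 + 1 * t ^ 4) * kTilde σ μ t := by
    rw [pNormSq]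
    congr 1
    ext t
    rw [pPoly]
    ring
  rw [h2, h]
  ring

/-- The functions `φᵢ, ψᵢ` form the dual basis of the enriched edge functionals
`I_j, L_j` of the first family. -/
theorem basis_first_family (v : Fin 3 → ℝ × ℝ) (hv : AffineIndependent ℝ v)
    (lam : Fin 3 → ℝ × ℝ → ℝ)
    (hlam : ∀ i, ∃ A : (ℝ × ℝ) →ᵃ[ℝ] ℝ, ∀ x, lam i x = A x)
    (hkr : ∀ i j, lam i (v j) = if i = j then (1:ℝ) else 0)
    (σ μ : ℝ) (hσ : 0 < σ) (hμ : 1 ≤ μ)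
    (i j : Fin 3) :
    (∫ t in (-1:ℝ)..1, phiB lam i (edgeParam v j t) * kTilde σ μ t
        = if i = j then (1:ℝ) else 0) ∧
    (∫ t in (-1:ℝ)..1, pPoly σ μ t * phiB lam i (edgeParam v j t) * kTilde σ μ t = 0) ∧
    (∫ t in (-1:ℝ)..1, psiB σ μ lam i (edgeParam v j t) * kTilde σ μ t = 0) ∧
    (∫ t in (-1:ℝ)..1, pPoly σ μ t * psiB σ μ lam i (edgeParam v j t) * kTilde σ μ t
        = if i = j then (1:ℝ) else 0) := by
  have hl : ∀ i t, lam i (edgeParam v j t) =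
      (1 + t) / 2 * (if i = j + 1 then 1 else 0) + (1 - t) / 2 * (if i = j + 2 then 1 else 0) := by
    intro i t
    obtain ⟨A, hA⟩ := hlam i
    rw [← hkr, ← hkr, hA, hA, hA, edgeParam]
    have e : ((1 + t) / 2) • v (j + 1) + ((1 - t) / 2) • v (j + 2)
        = AffineMap.lineMap (v (j + 2)) (v (j + 1)) ((1 + t) / 2) := by
      rw [AffineMap.lineMap_apply_module]
      rw [add_comm]
      congr 2
      ring
    rw [e, AffineMap.apply_lineMap, AffineMap.lineMap_apply_module]
    simp only [smul_eq_mul]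
    ring
  have hN := pN_pos σ μ hσ hμ
  have hNe := pN_eq σ μ hσ hμ
  have P := kT_poly σ μ hσ hμ
  have Q : ∀ (f : ℝ → ℝ) (r a b c d e : ℝ),
      (∀ t, f t = (a + b * t + c * t ^ 2 + d * t ^ 3 + e * t ^ 4) * kTilde σ μ t) →
      a + c * tMom2 σ μ + e * (∫ t in (-1:ℝ)..1, t ^ 4 * kTilde σ μ t) = r →
      ∫ t in (-1:ℝ)..1, f t = r := by
    intro f r a b c d e hf hr
    rw [← hr, ← P a b c d e]
    simp only [hf]
  have hM : (∫ t in (-1:ℝ)..1, t ^ 4 * kTilde σ μ t) = pNormSq σ μ + tMom2 σ μ ^ 2 := by linarith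
  rw [hM] at Q
  clear P hM hNe
  have cases3 : i = j ∨ i = j + 1 ∨ i = j + 2 := by
    have : ∀ i j : Fin 3, i = j ∨ i = j + 1 ∨ i = j + 2 := by decide
    exact this i j
  have hj1 : ∀ j : Fin 3, j ≠ j + 1 := by decide
  have hj2 : ∀ j : Fin 3, j ≠ j + 2 := by decide
  have hj12 : ∀ j : Fin 3, j + 1 ≠ j + 2 := by decide
  have a11 : ∀ j : Fin 3, j + 1 + 1 = j + 2 := by decide
  have a12 : ∀ j : Fin 3, j + 1 + 2 = j := by decide
  have a21 : ∀ j : Fin 3, j + 2 + 1 = j := by decide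
  have a22 : ∀ j : Fin 3, j + 2 + 2 = j + 1 := by decide
  have l0 : ∀ t, lam j (edgeParam v j t) = 0 := fun t => by simp [hl, hj1 j, hj2 j]
  have l1 : ∀ t, lam (j + 1) (edgeParam v j t) = (1 + t) / 2 := fun t => by
    rw [hl, if_pos rfl, if_neg (hj12 j)]; ring
  have l2 : ∀ t, lam (j + 2) (edgeParam v j t) = (1 - t) / 2 := fun t => by
    rw [hl, if_pos rfl, if_neg (hj12 j).symm]; ring
  rcases cases3 with rfl | rfl | rfl
  · simp only [if_true, phiB, psiB, l0, l1, l2, pPoly, Acoef]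
    generalize pNormSq σ μ = N at *
    generalize tMom2 σ μ = m at *
    refine ⟨Q _ _ 1 0 0 0 0 ?_ ?_, Q _ _ (-m) 0 1 0 0 ?_ ?_,
      Q _ _ (-(m / N)) 0 (1 / N) 0 0 ?_ ?_,
      Q _ _ (m ^ 2 / N) 0 (-2 * m / N) 0 (1 / N) ?_ ?_⟩ <;>
    · intros
      field_simp
      ring
  · simp only [if_neg (hj1 j).symm, phiB, psiB, a11, a12, l0, l1, l2, pPoly, Acoef]
    generalize pNormSq σ μ = N at *
    generalize tMom2 σ μ = m at *
    refine ⟨Q _ _ 0 (-1) 0 0 0 ?_ ?_, Q _ _ 0 m 0 (-1) 0 ?_ ?_,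
      Q _ _ 0 ((1 + m) / N - 2 / N) 0 0 0 ?_ ?_,
      Q _ _ 0 (-m * ((1 + m) / N - 2 / N)) 0 ((1 + m) / N - 2 / N) 0 ?_ ?_⟩ <;>
    · intros
      field_simp
      ring
  · simp only [if_neg (hj2 j).symm, phiB, psiB, a21, a22, l0, l1, l2, pPoly, Acoef]
    generalize pNormSq σ μ = N at *
    generalize tMom2 σ μ = m at *
    refine ⟨Q _ _ 0 1 0 0 0 ?_ ?_, Q _ _ 0 (-m) 0 1 0 ?_ ?_,
      Q _ _ 0 (-((1 + m) / N - 2 / N)) 0 0 0 ?_ ?_,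
      Q _ _ 0 (m * ((1 + m) / N - 2 / N)) 0 (-((1 + m) / N - 2 / N)) 0 ?_ ?_⟩ <;>
    · intros
      field_simp
      ring
end

section
/- Unisolvency of the second enriched triple: let v₁, v₂, v₃ ∈ ℝ² be affinely independent with barycentric coordinates λᵢ, let γⱼ(t) = ((1+t)/2) v_{j+1} + ((1-t)/2) v_{j+2} (indices modulo 3), and fix μ ≥ 1, σ > 0. Define, for f : ℝ² → ℝ, D_j(f) = ∫_{-1}^{1} f(γⱼ(t)) g̃_{σ,μ}(t) dt and S_j(f) = ∫_{-1}^{1} q_{σ,μ}(t) f(γⱼ(t)) g̃_{σ,μ}(t) dt, j = 1,2,3. If p₂ = Σᵢ₌₁³ aᵢ λᵢ + Σᵢ₌₁³ bᵢ λᵢ² with real coefficients aᵢ, bᵢ satisfies D_j(p₂) = 0 and S_j(p₂) = 0 for j = 1,2,3, then a₁ = a₂ = a₃ = b₁ = b₂ = b₃ = 0, and hence p₂ is the zero function. -/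
open MeasureTheory

/-- Second family of densities `g̃_{σ,μ}` on `[-1,1]`. -/
noncomputable def gTilde (σ μ t : ℝ) : ℝ :=
  ((2 * μ - 1) / gammaMod (1 / 2) (1 / (2 * σ ^ (4 * μ - 2)))) *
    (t ^ 2) ^ (μ - 1) * Real.exp (-(1 / 2) * (t ^ 2 / σ ^ 2) ^ (2 * μ - 1))

/-- Second moment `s_{2,σ,μ}` of `g̃_{σ,μ}`. -/
noncomputable def sMom2 (σ μ : ℝ) : ℝ := ∫ t in (-1:ℝ)..1, t ^ 2 * gTilde σ μ t

/-- The orthogonal quadratic polynomial `q_{σ,μ}(t) = t² - s_{2,σ,μ}`. -/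
noncomputable def qPoly (σ μ t : ℝ) : ℝ := t ^ 2 - sMom2 σ μ

lemma lowGamma_half_pos (z : ℝ) (hz : 0 < z) : 0 < lowGamma (1 / 2) z := by
  unfold lowGamma
  apply intervalIntegral.intervalIntegral_pos_of_pos_on _ _ hz
  · apply IntervalIntegrable.mul_continuousOn
    · apply intervalIntegral.intervalIntegrable_rpow'
      norm_num
    · fun_prop
  · intro x hx
    have := Real.rpow_pos_of_pos hx.1 (1 / 2 - 1)
    positivity

lemma gTilde_const_pos (σ μ : ℝ) (hσ : 0 < σ) (hμ : 1 ≤ μ) :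
    0 < (2 * μ - 1) / gammaMod (1 / 2) (1 / (2 * σ ^ (4 * μ - 2))) := by
  have h1 : 0 < 1 / (2 * σ ^ (4 * μ - 2)) := by positivity
  have h2 := lowGamma_half_pos _ h1
  have h3 : 0 < 2 * μ - 1 := by linarith
  unfold gammaMod
  positivity

lemma gTilde_cont (σ μ : ℝ) (hμ : 1 ≤ μ) : Continuous (gTilde σ μ) := by
  unfold gTilde
  have h1 : Continuous fun t : ℝ => (t ^ 2) ^ (μ - 1) :=
    (continuous_pow 2).rpow_const (fun x => Or.inr (by linarith))
  have h2 : Continuous fun t : ℝ => (t ^ 2 / σ ^ 2) ^ (2 * μ - 1) :=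
    ((continuous_pow 2).div_const _).rpow_const (fun x => Or.inr (by linarith))
  fun_prop

lemma gTilde_even (σ μ t : ℝ) : gTilde σ μ (-t) = gTilde σ μ t := by
  simp [gTilde]

lemma gTilde_pos (σ μ t : ℝ) (hσ : 0 < σ) (hμ : 1 ≤ μ) (ht : t ≠ 0) : 0 < gTilde σ μ t := by
  have := gTilde_const_pos σ μ hσ hμ
  have h2 : 0 < t ^ 2 := by positivity
  unfold gTilde
  positivity

lemma gTilde_nonneg (σ μ t : ℝ) (hσ : 0 < σ) (hμ : 1 ≤ μ) : 0 ≤ gTilde σ μ t := by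
  have := gTilde_const_pos σ μ hσ hμ
  unfold gTilde
  positivity

lemma odd_int (f : ℝ → ℝ) (hf : ∀ t, f (-t) = - f t) : ∫ t in (-1:ℝ)..1, f t = 0 := by
  have h := intervalIntegral.integral_comp_neg (a := (-1:ℝ)) (b := 1) f
  simp only [hf, intervalIntegral.integral_neg, neg_neg] at h
  linarith

lemma key (g : ℝ → ℝ) (hc : Continuous g) (he : ∀ t, g (-t) = g t) (hn : ∀ t, 0 ≤ g t)
    (hp : ∀ t, t ≠ 0 → 0 < g t) (s α ε β : ℝ)
    (hD : ∫ t in (-1:ℝ)..1, (α + ε * t + β * t ^ 2) * g t = 0)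
    (hS : ∫ t in (-1:ℝ)..1, (t ^ 2 - s) * (α + ε * t + β * t ^ 2) * g t = 0) :
    α = 0 ∧ β = 0 := by
  have ii : ∀ f : ℝ → ℝ, Continuous f → IntervalIntegrable f volume (-1) 1 :=
    fun f hf => hf.intervalIntegrable _ _
  have hodd : ∫ t in (-1:ℝ)..1, (α + β * t ^ 2) * (ε * t) * g t = 0 := by
    apply odd_int
    intro t
    rw [he]; ring
  have hzero : ∫ t in (-1:ℝ)..1, (α + β * t ^ 2) ^ 2 * g t = 0 := by
    have e : ∀ t, (α + β * t ^ 2) ^ 2 * g t =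
        (α + β * s) * ((α + ε * t + β * t ^ 2) * g t)
        + β * ((t ^ 2 - s) * (α + ε * t + β * t ^ 2) * g t)
        - (α + β * t ^ 2) * (ε * t) * g t := by
      intro t; ring
    simp_rw [e]
    rw [intervalIntegral.integral_sub (ii _ (by fun_prop)) (ii _ (by fun_prop)),
      intervalIntegral.integral_add (ii _ (by fun_prop)) (ii _ (by fun_prop)),
      intervalIntegral.integral_const_mul, intervalIntegral.integral_const_mul, hD, hS, hodd]
    ring
  have hv : ∀ c ∈ Set.Icc (-1:ℝ) 1, c ≠ 0 → α + β * c ^ 2 = 0 := by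
    intro c hcm hc0
    by_contra hne
    have : 0 < ∫ t in (-1:ℝ)..1, (α + β * t ^ 2) ^ 2 * g t := by
      apply intervalIntegral.integral_pos (by norm_num)
      · fun_prop
      · intro x _
        have := hn x
        positivity
      · refine ⟨c, hcm, ?_⟩
        have := hp c hc0
        positivity
    linarith
  have h1 := hv 1 (by norm_num) (by norm_num)
  have h2 := hv (1 / 2) (by norm_num) (by norm_num)
  constructor <;> linarith

lemma lam_edge (v : Fin 3 → ℝ × ℝ) (l : ℝ × ℝ → ℝ)
    (hl : ∃ A : (ℝ × ℝ) →ᵃ[ℝ] ℝ, ∀ x, l x = A x) (j : Fin 3) (t : ℝ) :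
    l (edgeParam v j t) = (1 + t) / 2 * l (v (j + 1)) + (1 - t) / 2 * l (v (j + 2)) := by
  obtain ⟨A, hA⟩ := hl
  have e : edgeParam v j t = AffineMap.lineMap (v (j + 2)) (v (j + 1)) ((1 + t) / 2) := by
    rw [AffineMap.lineMap_apply_module, edgeParam, add_comm]
    congr 2; ring
  rw [hA, hA, hA, e, AffineMap.apply_lineMap, AffineMap.lineMap_apply_module]
  simp only [smul_eq_mul]; ring

/-- Unisolvency of the second enriched triple: if a quadratic
`p₂ = Σ aᵢ λᵢ + Σ bᵢ λᵢ²` is annihilated by all the six enriched edge functionals,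
then all its coefficients vanish and `p₂ = 0`. -/
theorem unisolvent_second_family (v : Fin 3 → ℝ × ℝ) (hv : AffineIndependent ℝ v)
    (lam : Fin 3 → ℝ × ℝ → ℝ)
    (hlam : ∀ i, ∃ A : (ℝ × ℝ) →ᵃ[ℝ] ℝ, ∀ x, lam i x = A x)
    (hkr : ∀ i j, lam i (v j) = if i = j then (1:ℝ) else 0)
    (σ μ : ℝ) (hσ : 0 < σ) (hμ : 1 ≤ μ)
    (a b : Fin 3 → ℝ)
    (hD : ∀ j : Fin 3,
      ∫ t in (-1:ℝ)..1,
        ((∑ i : Fin 3, a i * lam i (edgeParam v j t))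
          + ∑ i : Fin 3, b i * (lam i (edgeParam v j t)) ^ 2) * gTilde σ μ t = 0)
    (hS : ∀ j : Fin 3,
      ∫ t in (-1:ℝ)..1,
        qPoly σ μ t *
          ((∑ i : Fin 3, a i * lam i (edgeParam v j t))
            + ∑ i : Fin 3, b i * (lam i (edgeParam v j t)) ^ 2) * gTilde σ μ t = 0) :
    (∀ i, a i = 0) ∧ (∀ i, b i = 0) ∧
      ∀ x : ℝ × ℝ, (∑ i : Fin 3, a i * lam i x) + ∑ i : Fin 3, b i * (lam i x) ^ 2 = 0 := by
  have hE : ∀ j t, ((∑ i : Fin 3, a i * lam i (edgeParam v j t))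
          + ∑ i : Fin 3, b i * (lam i (edgeParam v j t)) ^ 2) =
      ((a (j + 1) + a (j + 2)) / 2 + (b (j + 1) + b (j + 2)) / 4)
      + ((a (j + 1) - a (j + 2)) / 2 + (b (j + 1) - b (j + 2)) / 2) * t
      + ((b (j + 1) + b (j + 2)) / 4) * t ^ 2 := by
    intro j t
    simp only [fun i => lam_edge v (lam i) (hlam i) j t, hkr, Fin.sum_univ_three]
    fin_cases j <;> simp <;> ring
  have hk : ∀ j, _ := fun j => key (gTilde σ μ) (gTilde_cont σ μ hμ) (gTilde_even σ μ)
    (fun t => gTilde_nonneg σ μ t hσ hμ) (fun t ht => gTilde_pos σ μ t hσ hμ ht) (sMom2 σ μ)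
    _ _ _ (by simpa only [hE] using hD j) (by simpa only [hE, qPoly] using hS j)
  have h0 := hk 0
  have h1 := hk 1
  have h2 := hk 2
  have e1 : (1 : Fin 3) + 1 = 2 := rfl
  have e2 : (1 : Fin 3) + 2 = 0 := rfl
  have e3 : (2 : Fin 3) + 1 = 0 := rfl
  have e4 : (2 : Fin 3) + 2 = 1 := rfl
  simp only [zero_add, e1, e2, e3, e4] at h0 h1 h2
  obtain ⟨p0, q0⟩ := h0
  obtain ⟨p1, q1⟩ := h1
  obtain ⟨p2, q2⟩ := h2
  have ha : ∀ i, a i = 0 := by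
    intro i; fin_cases i <;> simp <;> linarith
  have hb : ∀ i, b i = 0 := by
    intro i; fin_cases i <;> simp <;> linarith
  exact ⟨ha, hb, fun x => by simp [ha, hb]⟩
end
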